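/- Infraoscillation (norm −1 case): let {f_n} ⊆ ℤ[θ] be a |·|_θ-Cauchy sequence such that |f_n|_θ does not converge to 0. Then there exist an integer m and an index N such that |f_n|_θ ∈ {θ^m, θ^{m+1}, θ^{m+2}} for all n ≥ N. In particular the sequence {|f_n|_θ} is bounded above and bounded below away from 0. -/

import Mathlib

/-!
Every nonzero `x ∈ ℤ[θ]` satisfies `θ⁻¹ |x'| ≤ |x|_θ ≤ θ |x'|`, where `x'` is the Galois conjugate
(`thNorm_bounds`). Given this, a `|·|_θ`-Cauchy sequence has a Cauchy sequence of conjugates in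
`ℝ`, with limit `L` say. If `L = 0`, then `|f_n|_θ → 0`. Otherwise choose `k` with
`θ^k ≤ |L| < θ^(k+1)`; eventually `θ^(k-1) < |f_n'| < θ^(k+1)`, so `|f_n|_θ`, a power of `θ`, lies
strictly between `θ^(k-2)` and `θ^(k+2)`.

The comparison of `|x|_θ` with `|x'|` rests on two facts.

* If `b` is admissible with `b_0 ≠ 0`, then `Σ b_i (θ')^i` lies in `[θ⁻¹, θ]`. This follows from the
  recursion `y = b_0 - y_1/θ` together with `b_1 ≤ a - 1` (`conj_sum_bounds`, `conj_sum_lower`).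
* Every positive element of `ℤ[θ]` has a finite admissible expansion (`exists_expansion`), so that
  `v(x)` is a genuine maximum. For the greedy map `r ↦ θr - ⌊θr⌋` on `ℤ[θ] ∩ [0,1)`, the conjugate
  evolves by `r' ↦ -r'/θ - ⌊θr⌋`, which contracts towards `[-θ, 1]`. Once `r' ∈ [-θ-1, 2]`, writing
  `r = p + qθ` and using `r - r' = q(θ + θ⁻¹)` forces `q ∈ {0,1}`, hence `r = 0` or `r = θ⁻¹`, and
  the expansion terminates.
-/

noncomputable section

/-- The real quadratic unit `θ = (a + √(a²+4))/2`, the positive root of `θ² = aθ + 1`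
(the norm `N(θ) = −1` case). -/
def theta (a : ℕ) : ℝ := ((a : ℝ) + Real.sqrt ((a : ℝ) ^ 2 + 4)) / 2

/-- The Galois conjugate `θ' = −θ⁻¹`. -/
def thetaConj (a : ℕ) : ℝ := -(theta a)⁻¹

/-- Membership in the ring `ℤ[θ]`. -/
def inOK (a : ℕ) (x : ℝ) : Prop := ∃ p q : ℤ, x = (p : ℝ) + (q : ℝ) * theta a

/-- A finite integer sequence, supported in `[m, M]`, is admissible (norm `−1` case) if all its
entries lie in `{0, …, a}` and an entry equal to `a` is always followed (below) by a `0`. -/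
def AdmissibleOn (a : ℕ) (m M : ℤ) (b : ℤ → ℤ) : Prop :=
  (∀ i, b i ≠ 0 → m ≤ i ∧ i ≤ M) ∧
  (∀ i, 0 ≤ b i ∧ b i ≤ (a : ℤ)) ∧
  (∀ i, b i = (a : ℤ) → b (i - 1) = 0)

/-- The set `ℤ_θ` of θ-integers: signed sums `± Σ_{i=0}^{M} b_i θ^i` with `(b_i)` admissible. -/
def Ztheta (a : ℕ) : Set ℝ :=
  { x | ∃ (ε : ℤ) (M : ℤ) (b : ℤ → ℤ), (ε = 1 ∨ ε = -1) ∧ 0 ≤ M ∧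
      AdmissibleOn a 0 M b ∧
      x = (ε : ℝ) * ∑ i ∈ Finset.Icc (0 : ℤ) M, (b i : ℝ) * theta a ^ i }

/-- `v(x) = max { k : ℤ | x / θ^k ∈ ℤ_θ }` (as a supremum in `ℤ`). -/
def vval (a : ℕ) (x : ℝ) : ℤ := sSup { k : ℤ | x / theta a ^ k ∈ Ztheta a }

/-- The θ-adic infranorm `|x|_θ = θ^{−v(x)}`, with `|0|_θ = 0`. -/
def thNorm (a : ℕ) (x : ℝ) : ℝ := if x = 0 then 0 else theta a ^ (-vval a x)

/-- A sequence in `ℝ` is `|·|_θ`-Cauchy. -/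
def IsThCauchy (a : ℕ) (x : ℕ → ℝ) : Prop :=
  ∀ ε : ℝ, 0 < ε → ∃ N : ℕ, ∀ i j : ℕ, N ≤ i → N ≤ j → thNorm a (x i - x j) < ε

open Filter Topology

/-! ### The unit `θ` and Galois conjugation -/

lemma theta_sq (a : ℕ) : theta a ^ 2 = a * theta a + 1 := by
  have h : Real.sqrt ((a : ℝ) ^ 2 + 4) ^ 2 = (a : ℝ) ^ 2 + 4 := Real.sq_sqrt (by positivity)
  unfold theta
  nlinarith [h]

lemma theta_pos (a : ℕ) : 0 < theta a := by
  have h : 0 < Real.sqrt ((a : ℝ) ^ 2 + 4) := Real.sqrt_pos.2 (by positivity)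
  unfold theta
  positivity

lemma theta_gt_one {a : ℕ} (ha : 1 ≤ a) : 1 < theta a := by
  have h1 : (1 : ℝ) ≤ a := by exact_mod_cast ha
  nlinarith [theta_sq a, theta_pos a]

lemma theta_inv (a : ℕ) : (theta a)⁻¹ = theta a - a := by
  have h := theta_pos a
  have h2 := theta_sq a
  field_simp
  linarith

lemma thetaConj_eq (a : ℕ) : thetaConj a = a - theta a := by
  unfold thetaConj
  rw [theta_inv]
  ring

lemma thetaConj_sq (a : ℕ) : thetaConj a ^ 2 = a * thetaConj a + 1 := by
  rw [thetaConj_eq]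
  nlinarith [theta_sq a]

lemma thetaConj_ne (a : ℕ) : thetaConj a ≠ 0 := by
  unfold thetaConj
  exact neg_ne_zero.2 (inv_ne_zero (theta_pos a).ne')

lemma thetaConj_inv (a : ℕ) : (thetaConj a)⁻¹ = thetaConj a - a := by
  have h := thetaConj_ne a
  have h2 := thetaConj_sq a
  field_simp
  linarith

lemma abs_thetaConj_zpow (a : ℕ) (k : ℤ) : |thetaConj a ^ k| = theta a ^ (-k) := by
  rw [abs_zpow, thetaConj, abs_neg, abs_of_pos (inv_pos.2 (theta_pos a)), inv_zpow, zpow_neg]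

lemma theta_irrational {a : ℕ} (ha : 1 ≤ a) : Irrational (theta a) := by
  have h : Irrational (Real.sqrt ((a ^ 2 + 4 : ℕ) : ℝ)) := by
    rw [irrational_sqrt_natCast_iff]
    rintro ⟨r, hr⟩
    -- `a² < r² < (a+2)²` forces `r = a + 1`, which fails by parity
    have h1 : a < r := by nlinarith
    have h2 : r < a + 2 := by nlinarith
    have h3 : r = a + 1 := by omega
    subst h3
    ring_nf at hr
    omega
  have h2 : theta a = ((a : ℝ) + Real.sqrt ((a ^ 2 + 4 : ℕ) : ℝ)) / (2 : ℕ) := by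
    unfold theta
    push_cast
    rfl
  rw [h2]
  exact (h.natCast_add a).div_natCast two_ne_zero

/-- `IsGalConj a x y` says that `x ∈ ℤ[θ]` and that `y` is its Galois conjugate. -/
def IsGalConj (a : ℕ) (x y : ℝ) : Prop :=
  ∃ p q : ℤ, x = p + q * theta a ∧ y = p + q * thetaConj a

lemma IsGalConj.unique {a : ℕ} (ha : 1 ≤ a) {x y z : ℝ} (h : IsGalConj a x y)
    (h' : IsGalConj a x z) :
    y = z := by
  obtain ⟨p, q, hx, hy⟩ := h
  obtain ⟨p', q', hx', hz⟩ := h'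
  by_cases hq : q = q'
  · subst hq
    have : (p : ℝ) = p' := by linarith
    rw [hy, hz, this]
  · exfalso
    have hq' : (q : ℝ) - q' ≠ 0 := by
      rw [sub_ne_zero]
      exact_mod_cast hq
    apply theta_irrational ha
    refine ⟨((p' - p : ℤ) : ℚ) / ((q - q' : ℤ) : ℚ), ?_⟩
    push_cast
    rw [div_eq_iff hq']
    linarith

lemma IsGalConj.sub {a : ℕ} {x y z w : ℝ} (h : IsGalConj a x y) (h' : IsGalConj a z w) :
    IsGalConj a (x - z) (y - w) := by
  obtain ⟨p, q, rfl, rfl⟩ := h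
  obtain ⟨p', q', rfl, rfl⟩ := h'
  exact ⟨p - p', q - q', by push_cast; ring, by push_cast; ring⟩

lemma IsGalConj.add {a : ℕ} {x y z w : ℝ} (h : IsGalConj a x y) (h' : IsGalConj a z w) :
    IsGalConj a (x + z) (y + w) := by
  obtain ⟨p, q, rfl, rfl⟩ := h
  obtain ⟨p', q', rfl, rfl⟩ := h'
  exact ⟨p + p', q + q', by push_cast; ring, by push_cast; ring⟩

lemma IsGalConj.int (a : ℕ) (n : ℤ) : IsGalConj a n n := ⟨n, 0, by simp, by simp⟩

lemma IsGalConj.int_mul {a : ℕ} {x y : ℝ} (h : IsGalConj a x y) (n : ℤ) :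
    IsGalConj a (n * x) (n * y) := by
  obtain ⟨p, q, rfl, rfl⟩ := h
  exact ⟨n * p, n * q, by push_cast; ring, by push_cast; ring⟩

lemma IsGalConj.mul_theta {a : ℕ} {x y : ℝ} (h : IsGalConj a x y) :
    IsGalConj a (x * theta a) (y * thetaConj a) := by
  obtain ⟨p, q, rfl, rfl⟩ := h
  refine ⟨q, p + a * q, ?_, ?_⟩
  · push_cast
    linear_combination (q : ℝ) * theta_sq a
  · push_cast
    linear_combination (q : ℝ) * thetaConj_sq a

lemma IsGalConj.mul_theta_inv {a : ℕ} {x y : ℝ} (h : IsGalConj a x y) :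
    IsGalConj a (x * (theta a)⁻¹) (y * (thetaConj a)⁻¹) := by
  have h1 := h.mul_theta.sub (h.int_mul a)
  rw [theta_inv, thetaConj_inv]
  convert h1 using 1 <;> push_cast <;> ring

lemma IsGalConj.mul_zpow {a : ℕ} {x y : ℝ} (h : IsGalConj a x y) (k : ℤ) :
    IsGalConj a (x * theta a ^ k) (y * thetaConj a ^ k) := by
  induction k with
  | zero => simpa using h
  | succ n ih =>
    rw [zpow_add_one₀ (theta_pos a).ne', zpow_add_one₀ (thetaConj_ne a), ← mul_assoc, ← mul_assoc]
    exact ih.mul_theta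
  | pred n ih =>
    rw [zpow_sub_one₀ (theta_pos a).ne', zpow_sub_one₀ (thetaConj_ne a), ← mul_assoc, ← mul_assoc]
    exact ih.mul_theta_inv

lemma IsGalConj.sum (a : ℕ) (b : ℤ → ℤ) (n : ℕ) :
    IsGalConj a (∑ i ∈ Finset.range n, (b i : ℝ) * theta a ^ i)
      (∑ i ∈ Finset.range n, (b i : ℝ) * thetaConj a ^ i) := by
  induction n with
  | zero => simpa using IsGalConj.int a 0
  | succ n ih =>
    rw [Finset.sum_range_succ, Finset.sum_range_succ]
    exact ih.add (by simpa using (IsGalConj.int a (b n)).mul_zpow n)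

/-! ### Conjugates of `θ`-integers -/

lemma conj_sum_succ (a n : ℕ) (b : ℕ → ℤ) :
    ∑ i ∈ Finset.range (n + 1), (b i : ℝ) * thetaConj a ^ i =
      b 0 - (theta a)⁻¹ * ∑ i ∈ Finset.range n, (b (i + 1) : ℝ) * thetaConj a ^ i := by
  rw [Finset.sum_range_succ', Finset.mul_sum, sub_eq_add_neg, ← Finset.sum_neg_distrib, add_comm]
  congr 1
  · simp
  · refine Finset.sum_congr rfl fun i _ => ?_
    rw [pow_succ]
    nth_rewrite 2 [thetaConj]
    ring

/-- The lower bound `-1` and the upper bound `b_0 + θ⁻¹` reproduce themselves under the recursion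
`y = b_0 - y_1/θ`, because `a + θ⁻¹ = θ`. -/
lemma conj_sum_bounds (a n : ℕ) : ∀ b : ℕ → ℤ, (∀ i, 0 ≤ b i ∧ b i ≤ a) →
    -1 ≤ ∑ i ∈ Finset.range n, (b i : ℝ) * thetaConj a ^ i ∧
    ∑ i ∈ Finset.range n, (b i : ℝ) * thetaConj a ^ i ≤ b 0 + (theta a)⁻¹ := by
  induction n with
  | zero =>
    intro b hb
    have h0 : (0 : ℝ) ≤ b 0 := by exact_mod_cast (hb 0).1
    have := inv_pos.2 (theta_pos a)
    simp only [Finset.range_zero, Finset.sum_empty]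
    constructor <;> linarith
  | succ n ih =>
    intro b hb
    obtain ⟨h1, h2⟩ := ih (fun i => b (i + 1)) (fun i => hb (i + 1))
    rw [conj_sum_succ]
    set s := ∑ i ∈ Finset.range n, (b (i + 1) : ℝ) * thetaConj a ^ i
    have h0 : (0 : ℝ) ≤ b 0 := by exact_mod_cast (hb 0).1
    have h3 : (b (0 + 1) : ℝ) ≤ a := by exact_mod_cast (hb (0 + 1)).2
    have hi := inv_pos.2 (theta_pos a)
    have h4 : s ≤ theta a := by
      have := theta_inv a
      linarith
    have h5 : (theta a)⁻¹ * theta a = 1 := inv_mul_cancel₀ (theta_pos a).ne'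
    constructor <;> nlinarith

lemma conj_sum_lower (a n : ℕ) (b : ℕ → ℤ) (hb : ∀ i, 0 ≤ b i ∧ b i ≤ a)
    (h0 : 1 ≤ b 0) (h1 : b 1 ≤ a - 1) :
    (theta a)⁻¹ ≤ ∑ i ∈ Finset.range (n + 1), (b i : ℝ) * thetaConj a ^ i := by
  obtain ⟨-, h2⟩ := conj_sum_bounds a n (fun i => b (i + 1)) (fun i => hb (i + 1))
  rw [conj_sum_succ]
  set s := ∑ i ∈ Finset.range n, (b (i + 1) : ℝ) * thetaConj a ^ i
  have h0' : (1 : ℝ) ≤ b 0 := by exact_mod_cast h0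
  have h3 : (b (0 + 1) : ℝ) ≤ a - 1 := by exact_mod_cast h1
  have hi := inv_pos.2 (theta_pos a)
  have h4 : s ≤ theta a - 1 := by
    have := theta_inv a
    linarith
  have h5 : (theta a)⁻¹ * theta a = 1 := inv_mul_cancel₀ (theta_pos a).ne'
  nlinarith

lemma sum_Icc_eq_range (g : ℤ → ℝ) (n : ℕ) :
    ∑ i ∈ Finset.Icc (0 : ℤ) n, g i = ∑ i ∈ Finset.range (n + 1), g i := by
  symm
  refine Finset.sum_bij (fun i _ => (i : ℤ)) ?_ ?_ ?_ ?_
  · intro i hi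
    simp only [Finset.mem_range, Finset.mem_Icc] at *
    omega
  · intro i _ j _ h
    exact_mod_cast h
  · intro i hi
    simp only [Finset.mem_Icc] at hi
    exact ⟨i.toNat, by simp only [Finset.mem_range]; omega, by omega⟩
  · intros
    rfl

lemma mem_Ztheta_iff (a : ℕ) (x : ℝ) : x ∈ Ztheta a ↔ ∃ (ε : ℤ) (n : ℕ) (b : ℤ → ℤ),
    (ε = 1 ∨ ε = -1) ∧ AdmissibleOn a 0 n b ∧
      x = ε * ∑ i ∈ Finset.range (n + 1), (b i : ℝ) * theta a ^ i := by
  constructor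
  · rintro ⟨ε, M, b, hε, hM, hb, hx⟩
    lift M to ℕ using hM
    refine ⟨ε, M, b, hε, hb, ?_⟩
    rw [hx, sum_Icc_eq_range]
    simp
  · rintro ⟨ε, M, b, hε, hb, hx⟩
    refine ⟨ε, M, b, hε, by positivity, hb, ?_⟩
    rw [hx, sum_Icc_eq_range]
    simp

/-! ### Finiteness of greedy expansions -/

/-- The terminal region of the greedy map: here the only elements of `ℤ[θ] ∩ [0,1)` are `0` and
`θ⁻¹`. -/
lemma terminal_region {a : ℕ} (ha : 1 ≤ a) {r s : ℝ} (h : IsGalConj a r s) (h0 : 0 ≤ r) (h1 : r < 1)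
    (hs : -theta a - 1 ≤ s) (hs' : s ≤ 2) : r = 0 ∨ r = (theta a)⁻¹ := by
  obtain ⟨p, q, hr, hsq⟩ := h
  have ht := theta_gt_one ha
  have hti := theta_inv a
  have hsq2 := theta_sq a
  have hd : r - s = q * (2 * theta a - a) := by
    rw [hr, hsq, thetaConj_eq]
    ring
  have ha' : (1 : ℝ) ≤ a := by exact_mod_cast ha
  have hD : 2 < 2 * theta a - a := by nlinarith
  have hD2 : theta a + 2 < 2 * (2 * theta a - a) := by nlinarith [sq_nonneg (theta a - 1)]
  have hq0 : 0 ≤ q := by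
    by_contra hneg
    have : (q : ℝ) ≤ -1 := by exact_mod_cast (by omega : q ≤ -1)
    nlinarith
  have hq1 : q ≤ 1 := by
    by_contra hneg
    have : (2 : ℝ) ≤ q := by exact_mod_cast (by omega : 2 ≤ q)
    nlinarith
  have hq : q = 0 ∨ q = 1 := by omega
  rcases hq with rfl | rfl
  · left
    have e : r = p := by rw [hr]; simp
    rw [e] at h0 h1
    have h0' : 0 ≤ p := by exact_mod_cast h0
    have h1' : p < 1 := by exact_mod_cast h1
    have : p = 0 := by omega
    rw [e, this]
    simp
  · right
    have hi0 : 0 < (theta a)⁻¹ := inv_pos.2 (theta_pos a)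
    have hi1 : (theta a)⁻¹ < 1 := inv_lt_one_of_one_lt₀ ht
    have e : r = p + theta a := by rw [hr]; simp
    -- `r` and `θ⁻¹ = θ - a` both lie in `[0,1)` and differ by the integer `p + a`
    have h2 : ((p + a : ℤ) : ℝ) < 1 := by push_cast; linarith
    have h3 : (-1 : ℝ) < ((p + a : ℤ) : ℝ) := by push_cast; linarith
    have h2' : p + a < 1 := by exact_mod_cast h2
    have h3' : -1 < p + (a : ℤ) := by exact_mod_cast h3
    have h4 : p = -(a : ℤ) := by omega
    rw [e, hti, h4]
    push_cast
    ring

/-- Prepending a leading digit to an expansion of `r₁ = θ r - d`. The admissibility condition at the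
new digit holds because `d = a` forces `r₁ < θ⁻¹`. -/
lemma expansion_step {a : ℕ} (ha : 1 ≤ a) {r : ℝ} (h1 : r < 1) (d : ℤ) (hd0 : 0 ≤ d) (hda : d ≤ a)
    (h : ∃ (n : ℕ) (b : ℤ → ℤ), AdmissibleOn a 0 (n - 1) b ∧
      (r * theta a - d) * theta a ^ n = ∑ i ∈ Finset.range n, (b i : ℝ) * theta a ^ i) :
    ∃ (n : ℕ) (b : ℤ → ℤ), AdmissibleOn a 0 (n - 1) b ∧
      r * theta a ^ n = ∑ i ∈ Finset.range n, (b i : ℝ) * theta a ^ i := by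
  obtain ⟨n, b, ⟨hb1, hb2, hb3⟩, hsum⟩ := h
  have htp := theta_pos a
  refine ⟨n + 1, Function.update b n d, ⟨?_, ?_, ?_⟩, ?_⟩
  · intro i hi
    by_cases hin : i = n
    · subst hin
      push_cast
      omega
    · rw [Function.update_of_ne hin] at hi
      have := hb1 i hi
      push_cast
      omega
  · intro i
    by_cases hin : i = n
    · subst hin
      simp [hd0, hda]
    · rw [Function.update_of_ne hin]
      exact hb2 i
  · intro i hi
    by_cases hin : i = n
    · subst hin
      rw [Function.update_self] at hi
      rw [Function.update_of_ne (by omega)]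
      by_contra hne
      obtain ⟨hn0, -⟩ := hb1 _ hne
      obtain ⟨k, rfl⟩ : ∃ k : ℕ, n = k + 1 := ⟨n - 1, by omega⟩
      have hpos := (hb2 ((k + 1 : ℕ) - 1)).1
      have hge : 1 ≤ b ((k + 1 : ℕ) - 1) := by omega
      have e : (((k + 1 : ℕ) : ℤ) - 1) = (k : ℤ) := by push_cast; ring
      rw [e] at hge
      have hge' : (1 : ℝ) ≤ b k := by exact_mod_cast hge
      have hle : (b k : ℝ) * theta a ^ k ≤
          ∑ i ∈ Finset.range (k + 1), (b i : ℝ) * theta a ^ i := by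
        refine Finset.single_le_sum (f := fun i : ℕ => (b i : ℝ) * theta a ^ i)
          (fun i _ => ?_) (Finset.self_mem_range_succ k)
        have : (0 : ℝ) ≤ b i := by exact_mod_cast (hb2 i).1
        positivity
      rw [← hsum, hi, pow_succ] at hle
      have hk : 0 < theta a ^ k := by positivity
      have h5 : (r * theta a - a) * theta a < 1 := by
        nlinarith [theta_sq a, mul_pos (sub_pos.2 h1) (pow_pos htp 2)]
      push_cast at hle
      nlinarith
    · rw [Function.update_of_ne hin] at hi
      have := hb3 i hi
      by_cases hin' : i - 1 = n
      · have h6 : b i = 0 := by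
          by_contra hne
          have := hb1 i hne
          omega
        omega
      · rw [Function.update_of_ne hin', this]
  · rw [Finset.sum_range_succ, Function.update_self]
    have : ∑ i ∈ Finset.range n, ((Function.update b n d i : ℤ) : ℝ) * theta a ^ i =
        ∑ i ∈ Finset.range n, (b i : ℝ) * theta a ^ i := by
      refine Finset.sum_congr rfl fun i hi => ?_
      rw [Function.update_of_ne]
      have := Finset.mem_range.1 hi
      omega
    rw [this, ← hsum]
    ring

lemma expansion_zero (a : ℕ) : ∃ (n : ℕ) (b : ℤ → ℤ), AdmissibleOn a 0 (n - 1) b ∧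
    0 * theta a ^ n = ∑ i ∈ Finset.range n, (b i : ℝ) * theta a ^ i :=
  ⟨0, fun _ => 0, ⟨by simp, by simp, by simp⟩, by simp⟩

/-- Finiteness of the greedy expansion on `[0,1)`, by induction on the number of steps needed for
the conjugate to reach the terminal region. -/
lemma expansion_unit {a : ℕ} (ha : 1 ≤ a) (N : ℕ) : ∀ r s : ℝ, IsGalConj a r s → 0 ≤ r → r < 1 →
    -theta a - theta a ^ N ≤ s → s ≤ 1 + theta a ^ N →
    ∃ (n : ℕ) (b : ℤ → ℤ), AdmissibleOn a 0 (n - 1) b ∧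
      r * theta a ^ n = ∑ i ∈ Finset.range n, (b i : ℝ) * theta a ^ i := by
  have htp := theta_pos a
  induction N with
  | zero =>
    intro r s h h0 h1 hs hs'
    rw [pow_zero] at hs hs'
    rcases terminal_region ha h h0 h1 hs (by linarith) with rfl | rfl
    · exact expansion_zero a
    · refine expansion_step ha h1 1 (by norm_num) (by exact_mod_cast ha) ?_
      rw [inv_mul_cancel₀ htp.ne']
      simpa using expansion_zero a
  | succ N ih =>
    intro r s h h0 h1 hs hs'
    have hd0 : 0 ≤ ⌊r * theta a⌋ := Int.floor_nonneg.2 (by positivity)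
    have hti := theta_inv a
    have hi0 : 0 < (theta a)⁻¹ := inv_pos.2 htp
    have hi1 : (theta a)⁻¹ < 1 := inv_lt_one_of_one_lt₀ (theta_gt_one ha)
    have hda : ⌊r * theta a⌋ ≤ a := by
      have : ⌊r * theta a⌋ < (a : ℤ) + 1 := by
        rw [Int.floor_lt]
        push_cast
        nlinarith
      omega
    refine expansion_step ha h1 _ hd0 hda ?_
    have hd0' : (0 : ℝ) ≤ ⌊r * theta a⌋ := by exact_mod_cast hd0
    have hda' : (⌊r * theta a⌋ : ℝ) ≤ a := by exact_mod_cast hda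
    have hc : s * thetaConj a = -((theta a)⁻¹ * s) := by rw [thetaConj]; ring
    have hone : (theta a)⁻¹ * theta a = 1 := inv_mul_cancel₀ htp.ne'
    have hpow : (theta a)⁻¹ * theta a ^ (N + 1) = theta a ^ N := by
      rw [pow_succ']
      field_simp
    have k1 := mul_le_mul_of_nonneg_left hs hi0.le
    have k2 := mul_le_mul_of_nonneg_left hs' hi0.le
    rw [mul_sub, mul_neg, hone, hpow] at k1
    rw [mul_add, mul_one, hpow] at k2
    refine ih _ _ (h.mul_theta.sub (IsGalConj.int a ⌊r * theta a⌋)) ?_ ?_ ?_ ?_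
    · linarith [Int.floor_le (r * theta a)]
    · linarith [Int.lt_floor_add_one (r * theta a)]
    · rw [hc]
      linarith
    · rw [hc]
      linarith

lemma exists_expansion_pos {a : ℕ} (ha : 1 ≤ a) {x y : ℝ} (h : IsGalConj a x y) (hx : 0 < x) :
    ∃ (k : ℤ) (n : ℕ) (b : ℤ → ℤ), AdmissibleOn a 0 n b ∧
      x / theta a ^ k = ∑ i ∈ Finset.range (n + 1), (b i : ℝ) * theta a ^ i := by
  have htp := theta_pos a
  have ht := theta_gt_one ha
  obtain ⟨K, hK⟩ := pow_unbounded_of_one_lt x ht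
  have hc := h.mul_zpow (-(K : ℤ))
  set s := y * thetaConj a ^ (-(K : ℤ))
  obtain ⟨N, hN⟩ := pow_unbounded_of_one_lt |s| ht
  have hr0 : 0 ≤ x * theta a ^ (-(K : ℤ)) := by positivity
  have hr1 : x * theta a ^ (-(K : ℤ)) < 1 := by
    rw [zpow_neg, zpow_natCast, ← div_eq_mul_inv, div_lt_one (by positivity)]
    exact hK
  have hs := abs_lt.1 hN
  obtain ⟨n, b, ⟨hb1, hb2, hb3⟩, hsum⟩ := expansion_unit ha N _ _ hc hr0 hr1
    (by linarith [hs.1]) (by linarith [hs.2])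
  refine ⟨K - n, n, b, ⟨fun i hi => ?_, hb2, hb3⟩, ?_⟩
  · have := hb1 i hi
    omega
  · have hbn : b n = 0 := by
      by_contra hne
      have := hb1 _ hne
      omega
    rw [Finset.sum_range_succ, hbn, ← hsum, zpow_sub₀ htp.ne', zpow_neg]
    simp only [zpow_natCast]
    field_simp
    simp

lemma exists_expansion {a : ℕ} (ha : 1 ≤ a) {x y : ℝ} (h : IsGalConj a x y) (hx : x ≠ 0) :
    ∃ k : ℤ, x / theta a ^ k ∈ Ztheta a := by
  rcases lt_or_gt_of_ne hx with hneg | hpos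
  · have h' := h.int_mul (-1)
    have hxx : 0 < ((-1 : ℤ) : ℝ) * x := by push_cast; linarith
    obtain ⟨k, n, b, hb, hs⟩ := exists_expansion_pos ha h' hxx
    refine ⟨k, (mem_Ztheta_iff a _).2 ⟨-1, n, b, Or.inr rfl, hb, ?_⟩⟩
    rw [← hs]
    push_cast
    ring
  · obtain ⟨k, n, b, hb, hs⟩ := exists_expansion_pos ha h hpos
    exact ⟨k, (mem_Ztheta_iff a _).2 ⟨1, n, b, Or.inl rfl, hb, by rw [← hs]; simp⟩⟩

/-! ### Comparison of the infranorm with the conjugate -/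

/-- The conjugate of `x = ε θ^k Σ b_i θ^i` in absolute value. -/
lemma abs_conj_eq {a : ℕ} (ha : 1 ≤ a) {x y : ℝ} (h : IsGalConj a x y) {k ε : ℤ} {n : ℕ} {b : ℤ → ℤ}
    (hε : ε = 1 ∨ ε = -1)
    (hx : x / theta a ^ k = ε * ∑ i ∈ Finset.range (n + 1), (b i : ℝ) * theta a ^ i) :
    |y| = |∑ i ∈ Finset.range (n + 1), (b i : ℝ) * thetaConj a ^ i| * theta a ^ (-k) := by
  have h1 := ((IsGalConj.sum a b (n + 1)).int_mul ε).mul_zpow k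
  rw [← hx, div_mul_cancel₀ _ (zpow_ne_zero _ (theta_pos a).ne')] at h1
  rw [h.unique ha h1, abs_mul, abs_mul, abs_thetaConj_zpow]
  rcases hε with rfl | rfl <;> simp

lemma abs_conj_le {a : ℕ} (ha : 1 ≤ a) {x y : ℝ} (h : IsGalConj a x y) {k : ℤ}
    (hx : x / theta a ^ k ∈ Ztheta a) : |y| ≤ theta a * theta a ^ (-k) := by
  obtain ⟨ε, n, b, hε, ⟨-, hb2, -⟩, hs⟩ := (mem_Ztheta_iff a _).1 hx
  rw [abs_conj_eq ha h hε hs]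
  obtain ⟨h1, h2⟩ := conj_sum_bounds a (n + 1) (fun i => b i) (fun i => hb2 i)
  simp only [Nat.cast_zero] at h2
  have h3 : (b 0 : ℝ) ≤ a := by exact_mod_cast (hb2 0).2
  have hti := theta_inv a
  have htp := theta_pos a
  have ht := theta_gt_one ha
  refine mul_le_mul_of_nonneg_right (abs_le.2 ⟨?_, ?_⟩) (by positivity) <;> linarith

/-- A vanishing lowest digit allows a further division by `θ`. -/
lemma shift_mem {a : ℕ} {x : ℝ} {k ε : ℤ} {n : ℕ} {b : ℤ → ℤ}
    (hε : ε = 1 ∨ ε = -1) (hb : AdmissibleOn a 0 n b) (hb0 : b 0 = 0)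
    (hx : x / theta a ^ k = ε * ∑ i ∈ Finset.range (n + 1), (b i : ℝ) * theta a ^ i) :
    x / theta a ^ (k + 1) ∈ Ztheta a := by
  obtain ⟨hb1, hb2, hb3⟩ := hb
  have htp := theta_pos a
  refine (mem_Ztheta_iff a _).2
    ⟨ε, n, fun i => b (i + 1), hε, ⟨fun i hi => ?_, fun i => hb2 _, fun i hi => ?_⟩, ?_⟩
  · have := hb1 _ hi
    have h0 : i + 1 ≠ 0 := fun h0 => hi (by simp only [h0, hb0])
    omega
  · have := hb3 _ hi
    simpa using this
  · have hbn : b (n + 1) = 0 := by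
      by_contra hne
      have := hb1 _ hne
      omega
    rw [zpow_add_one₀ htp.ne', ← div_div, hx, Finset.sum_range_succ', Finset.sum_range_succ]
    simp only [Nat.cast_zero, hb0, hbn, Int.cast_zero, zero_mul, add_zero]
    rw [mul_div_assoc, Finset.sum_div]
    congr 1
    refine Finset.sum_congr rfl fun i _ => ?_
    rw [pow_succ]
    push_cast
    field_simp

lemma thNorm_bounds {a : ℕ} (ha : 1 ≤ a) {x y : ℝ} (h : IsGalConj a x y) :
    |y| ≤ theta a * thNorm a x ∧ thNorm a x ≤ theta a * |y| := by
  by_cases hx : x = 0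
  · have hy : y = 0 := by
      subst hx
      exact h.unique ha (by simpa using IsGalConj.int a 0)
    simp [thNorm, hx, hy]
  have htp := theta_pos a
  have ht := theta_gt_one ha
  have hy : 0 < |y| := by
    obtain ⟨p, q, hp, hq⟩ := h
    rw [abs_pos]
    rintro rfl
    apply hx
    -- `y = 0` gives `p = q(θ - a)`, so for `q ≠ 0` the number `θ = (p + aq)/q` would be rational
    by_cases hq0 : q = 0
    · subst hq0
      have : (p : ℝ) = 0 := by simpa using hq.symm
      simp [hp, this]
    · exfalso
      have hq0' : (q : ℝ) ≠ 0 := by exact_mod_cast hq0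
      apply theta_irrational ha
      refine ⟨((p + a * q : ℤ) : ℚ) / (q : ℚ), ?_⟩
      push_cast
      rw [div_eq_iff hq0']
      rw [thetaConj_eq] at hq
      linarith
  have hne : {k : ℤ | x / theta a ^ k ∈ Ztheta a}.Nonempty := exists_expansion ha h hx
  have hbdd : BddAbove {k : ℤ | x / theta a ^ k ∈ Ztheta a} := by
    obtain ⟨K, hK⟩ := pow_unbounded_of_one_lt (theta a / |y|) ht
    refine ⟨K, fun k hk => ?_⟩
    have h1 := abs_conj_le ha h hk
    have h2 : theta a ^ k ≤ theta a / |y| := by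
      rw [zpow_neg, ← div_eq_mul_inv, le_div_iff₀ (by positivity)] at h1
      rw [le_div_iff₀ hy]
      linarith
    have h3 : theta a ^ k < theta a ^ (K : ℤ) := by
      rw [zpow_natCast]
      exact lt_of_le_of_lt h2 hK
    exact ((zpow_lt_zpow_iff_right₀ ht).1 h3).le
  have hmem : x / theta a ^ vval a x ∈ Ztheta a := Int.csSup_mem hne hbdd
  have hN : thNorm a x = theta a ^ (-vval a x) := by simp [thNorm, hx]
  refine ⟨hN ▸ abs_conj_le ha h hmem, ?_⟩
  obtain ⟨ε, n, b, hε, hb, hs⟩ := (mem_Ztheta_iff a _).1 hmem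
  have hb0 : b 0 ≠ 0 := by
    intro hb0
    have h1 : vval a x + 1 ≤ vval a x := le_csSup hbdd (shift_mem hε hb hb0 hs)
    omega
  obtain ⟨-, hb2, hb3⟩ := hb
  have hlow := conj_sum_lower a n (fun i => b i) (fun i => hb2 i)
    (by have := (hb2 0).1; simp only [Nat.cast_zero]; omega)
    (by
      have h1 := (hb2 1).2
      have h2 : b 1 ≠ a := fun h2 => hb0 (by simpa using hb3 1 h2)
      simp only [Nat.cast_one]
      omega)
  rw [hN, abs_conj_eq ha h hε hs, ← mul_assoc]
  refine le_mul_of_one_le_left (by positivity) ?_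
  have h1 := hlow.trans (le_abs_self _)
  calc (1 : ℝ) = theta a * (theta a)⁻¹ := (mul_inv_cancel₀ htp.ne').symm
    _ ≤ _ := mul_le_mul_of_nonneg_left h1 htp.le

/-! ### Infraoscillation -/

/-- Infraoscillation, norm `−1` case. Let `{f_n} ⊆ ℤ[θ]` be a `|·|_θ`-Cauchy
sequence such that `|f_n|_θ` does not converge to `0`. Then there exist `m : ℤ` and `N` such
that `|f_n|_θ ∈ {θ^m, θ^{m+1}, θ^{m+2}}` for all `n ≥ N`; in particular `{|f_n|_θ}` is bounded
above and bounded below away from `0`. -/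
theorem infraoscillation_neg_one (a : ℕ) (ha : 1 ≤ a) (f : ℕ → ℝ)
    (hf : ∀ n, inOK a (f n)) (hc : IsThCauchy a f)
    (hnz : ¬ Filter.Tendsto (fun n => thNorm a (f n)) Filter.atTop (nhds 0)) :
    ∃ (m : ℤ) (N : ℕ), ∀ n, N ≤ n →
      thNorm a (f n) = theta a ^ m ∨ thNorm a (f n) = theta a ^ (m + 1) ∨
        thNorm a (f n) = theta a ^ (m + 2) := by
  have htp := theta_pos a
  have ht := theta_gt_one ha
  have hg : ∀ n, ∃ y, IsGalConj a (f n) y := fun n => by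
    obtain ⟨p, q, h⟩ := hf n
    exact ⟨_, p, q, h, rfl⟩
  choose g hg using hg
  have hcs : CauchySeq g := by
    rw [Metric.cauchySeq_iff]
    intro ε hε
    obtain ⟨N, hN⟩ := hc (ε / theta a) (by positivity)
    refine ⟨N, fun i hi j hj => ?_⟩
    rw [Real.dist_eq]
    refine lt_of_le_of_lt (thNorm_bounds ha ((hg i).sub (hg j))).1 ?_
    have := hN i j hi hj
    rw [lt_div_iff₀ htp] at this
    linarith
  obtain ⟨L, hL⟩ := cauchySeq_tendsto_of_complete hcs
  have habs : Tendsto (fun n => |g n|) atTop (𝓝 |L|) := hL.abs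
  have hL0 : 0 < |L| := by
    rw [abs_pos]
    rintro rfl
    apply hnz
    have h1 : Tendsto (fun n => theta a * |g n|) atTop (𝓝 0) := by
      simpa using habs.const_mul (theta a)
    refine squeeze_zero (fun n => ?_) (fun n => (thNorm_bounds ha (hg n)).2) h1
    unfold thNorm
    split_ifs
    · exact le_rfl
    · positivity
  obtain ⟨k, hk1, hk2⟩ := exists_mem_Ico_zpow hL0 ht
  have hk0 : theta a ^ (k - 1) < |L| :=
    lt_of_lt_of_le ((zpow_lt_zpow_iff_right₀ ht).2 (by omega)) hk1
  obtain ⟨N, hN⟩ := eventually_atTop.1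
    ((habs.eventually (lt_mem_nhds hk0)).and (habs.eventually (gt_mem_nhds hk2)))
  refine ⟨k - 1, N, fun n hn => ?_⟩
  obtain ⟨h1, h2⟩ := hN n hn
  obtain ⟨b1, b2⟩ := thNorm_bounds ha (hg n)
  have hfn : f n ≠ 0 := by
    intro h0
    have h3 : 0 < theta a ^ (k - 1) := by positivity
    rw [h0] at b1
    simp only [thNorm, if_true, mul_zero] at b1
    linarith
  have hT : thNorm a (f n) = theta a ^ (-vval a (f n)) := by simp [thNorm, hfn]
  rw [hT] at b1 b2 ⊢
  have u : theta a ^ (-vval a (f n)) < theta a ^ (k + 1 + 1) := by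
    rw [zpow_add_one₀ htp.ne' (k + 1)]
    nlinarith
  have l : theta a ^ (k - 1) < theta a ^ (-vval a (f n) + 1) := by
    rw [zpow_add_one₀ htp.ne' (-vval a (f n))]
    nlinarith
  rw [zpow_lt_zpow_iff_right₀ ht] at u l
  have : -vval a (f n) = k - 1 ∨ -vval a (f n) = k - 1 + 1 ∨ -vval a (f n) = k - 1 + 2 := by omega
  rcases this with h | h | h <;> simp [h]
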